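/- Let R̂₃ be the unique positive root of R⁴ − 2R³ − 4R² − 3R − 1 = 0 (R̂₃ ≈ 3.4405). Then for all real x, y with 0 < x < R̂₃ and 0 < y < R̂₃, one has 0 < β(x,y) < 1. -/

import Mathlib

/-- The auxiliary function `β(x,y) = d₂(x,y)/d₀(x,y)` of the BDF3 analysis. -/
noncomputable def betaF (x y : ℝ) : ℝ :=
  x*(x + 1)^2*y^2 / ((y + 1)*(3*x^2*y + 4*x*y + 2*x + y + 1))

/-- Lemma A.2: if `R̂₃` is the unique positive root of `R⁴ - 2R³ - 4R² - 3R - 1 = 0`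
(`R̂₃ ≈ 3.4405`), then `0 < β(x,y) < 1` for all `0 < x < R̂₃`, `0 < y < R̂₃`. -/
theorem beta_lt_one (Rhat : ℝ) (hpos : 0 < Rhat)
    (hroot : Rhat^4 - 2*Rhat^3 - 4*Rhat^2 - 3*Rhat - 1 = 0)
    (huniq : ∀ x : ℝ, 0 < x → x^4 - 2*x^3 - 4*x^2 - 3*x - 1 = 0 → x = Rhat) :
    ∀ x y : ℝ, 0 < x → x < Rhat → 0 < y → y < Rhat →
      0 < betaF x y ∧ betaF x y < 1 := by
  intro x y hx hxR hy hyR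
  have h1 : 0 < Rhat - x := sub_pos.2 hxR
  have h2 : 0 < Rhat - y := sub_pos.2 hyR
  have hD : 0 < (y + 1)*(3*x^2*y + 4*x*y + 2*x + y + 1) := by positivity
  have hE : 0 < (Rhat + 1)*(3*x^2*Rhat + 4*x*Rhat + 2*x + Rhat + 1) := by positivity
  have hN : 0 < x*(x + 1)^2 := by positivity
  have hDR : 0 < 3*Rhat^3 + 4*Rhat^2 + 3*Rhat + 1 := by positivity
  have s1 : 0 < Rhat^2 * ((y + 1)*(3*x^2*y + 4*x*y + 2*x + y + 1))
      - y^2 * ((Rhat + 1)*(3*x^2*Rhat + 4*x*Rhat + 2*x + Rhat + 1)) := by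
    have : 0 < (Rhat - y) * ((3*x^2+6*x+2)*Rhat*y + (2*x+1)*(Rhat+y)) := by positivity
    linarith
  have s2 : 0 < Rhat*(Rhat+1)^2*(3*x^2*Rhat + 4*x*Rhat + 2*x + Rhat + 1)
      - x*(x+1)^2*(3*Rhat^3 + 4*Rhat^2 + 3*Rhat + 1) := by
    have : 0 < (Rhat - x) * (3*Rhat*Rhat^2*x^2 + (4*Rhat+2)*Rhat*x*(Rhat+x)
        + (Rhat+1)*(Rhat^2+Rhat*x+x^2) + (5*Rhat+4)*Rhat*x + 2*(Rhat+1)*(Rhat+x)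
        + (Rhat+1)) := by positivity
    linarith
  have hr : Rhat^4 + Rhat^3 = 3*Rhat^3 + 4*Rhat^2 + 3*Rhat + 1 := by linarith
  have s3 : x*(x+1)^2*Rhat^2
      < (Rhat + 1)*(3*x^2*Rhat + 4*x*Rhat + 2*x + Rhat + 1) := by
    rw [← hr] at s2
    have e : 0 < (Rhat * (Rhat+1)) * ((Rhat + 1)*(3*x^2*Rhat + 4*x*Rhat + 2*x + Rhat + 1)
        - x*(x+1)^2*Rhat^2) := by linarith
    have := pos_of_mul_pos_right e (by positivity)
    linarith
  unfold betaF
  refine ⟨by positivity, ?_⟩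
  rw [div_lt_one hD]
  have a1 := mul_pos hN s1
  have a2 := mul_lt_mul_of_pos_right s3 hD
  refine lt_of_mul_lt_mul_right ?_ hE.le
  linarith
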